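/- On three qubits, no list of exactly four CNOT gates has composition equal to the cyclic-shift permutation gate x ↦ x ∘ c, where c : Fin 3 → Fin 3 is the 3-cycle sending j to j+1 (mod 3). -/

import Mathlib

/-- The CNOT gate with control `a` and target `b` acting on computational
basis states of an `n`-qubit system. -/
def CNOT {n : ℕ} (a b : Fin n) (x : Fin n → Bool) : Fin n → Bool :=
  fun j => if j = b then xor (x a) (x b) else x j

/-- The composition of a list of CNOT gates, applied in order. -/
def circuit {n : ℕ} (L : List (Fin n × Fin n)) (x : Fin n → Bool) : Fin n → Bool :=
  L.foldl (fun y g => CNOT g.1 g.2 y) x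

/-! Suppose that a circuit realizes `x ↦ x ∘ f`, let `T` be the set of wires `j` with
`f (f j) ≠ j`, and let `S ⊆ T` consist of those that are the target of exactly one gate. Every wire
of `T` changes its value, so it is a target, and counting gates by their targets gives
`2 |T| ≤ |L| + |S|`.

Regard the value of a wire at a given time as a function of the input `x`. When the only gate with
target `b ∈ S` fires, its control wire holds `x b + x (f b)`. No wire holds this at the end, so some
gate overwrites it. The original values `x j`, `j ∈ T`, are overwritten as well, and all these
values are distinct. As each gate overwrites one value, `|T| + |S| ≤ |L|`. Adding the two
inequalities gives `3 |T| ≤ 2 |L|`. For the 3-cycle `|T| = 3`, so four gates do not suffice. -/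

open Finset

section ListCount

variable {α : Type*} [DecidableEq α]

theorem sum_count_le_length (l : List α) (s : Finset α) : ∑ a ∈ s, l.count a ≤ l.length :=
  calc ∑ a ∈ s, l.count a
    _ ≤ ∑ a ∈ s ∪ l.toFinset, l.count a := sum_le_sum_of_subset subset_union_left
    _ = l.length := by
      simpa using Multiset.sum_count_eq_card (s := s ∪ l.toFinset) (m := (l : Multiset α))
        fun a ha => mem_union_right s (List.mem_toFinset.mpr ha)

theorem two_mul_card_le_length_add_card_count_eq_one {l : List α} {s : Finset α}
    (hs : ∀ a ∈ s, a ∈ l) : 2 * #s ≤ l.length + #{a ∈ s | l.count a = 1} := by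
  have two_le {a : α} (ha : a ∈ s) : 2 ≤ l.count a + if l.count a = 1 then 1 else 0 := by
    have : 0 < l.count a := List.count_pos_iff.mpr (hs a ha)
    split_ifs <;> lia
  calc 2 * #s
    _ = ∑ _a ∈ s, 2 := by rw [sum_const, smul_eq_mul, mul_comm]
    _ ≤ ∑ a ∈ s, (l.count a + if l.count a = 1 then 1 else 0) := sum_le_sum fun _ => two_le
    _ = ∑ a ∈ s, l.count a + #{a ∈ s | l.count a = 1} := by rw [sum_add_distrib, card_filter]
    _ ≤ l.length + #{a ∈ s | l.count a = 1} := by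
      gcongr
      exact sum_count_le_length l s

end ListCount

section PairParity

variable {ι : Type*}

theorem eval_injective {β : Type*} [Nontrivial β] :
    Function.Injective fun (i : ι) (x : ι → β) => x i := by
  classical
  intro i j h
  obtain ⟨b, c, hbc⟩ := exists_pair_ne β
  by_contra hij
  exact hbc (by simpa [hij] using congrFun h (Function.update (fun _ => b) j c))

/-- The parity `x i + x j` of two bits of the input `x`. -/
def pairParity (i j : ι) (x : ι → Bool) : Bool :=
  xor (x i) (x j)

theorem pairParity_ne_eval (i j k : ι) : pairParity i j ≠ fun x => x k := fun h => by
  simpa [pairParity] using congrFun h fun _ => true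

theorem eq_or_eq_of_pairParity_eq {i j k l : ι} (hij : i ≠ j)
    (h : pairParity i j = pairParity k l) : i = k ∨ i = l := by
  classical
  by_contra! hne
  simpa [pairParity, hij.symm, hne.1.symm, hne.2.symm] using congrFun h fun m => decide (m = i)

theorem apply_ne_of_apply_apply_ne {f : ι → ι} {i : ι} (hi : f (f i) ≠ i) : f i ≠ i :=
  fun h => hi (by rw [h, h])

theorem injOn_pairParity_apply (f : ι → ι) :
    Set.InjOn (fun b => pairParity b (f b)) {b | f (f b) ≠ b} := by
  intro b hb c hc hbc
  by_contra hne
  have hb' : b = f c :=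
    (eq_or_eq_of_pairParity_eq (apply_ne_of_apply_apply_ne hb).symm hbc).resolve_left hne
  have hc' : c = f b :=
    (eq_or_eq_of_pairParity_eq (apply_ne_of_apply_apply_ne hc).symm hbc.symm).resolve_left
      (Ne.symm hne)
  exact hb (by rw [← hc', ← hb'])

end PairParity

variable {n : ℕ}

theorem CNOT_apply_self (a b : Fin n) (x : Fin n → Bool) : CNOT a b x b = xor (x a) (x b) :=
  if_pos rfl

theorem CNOT_apply_of_ne {b j : Fin n} (h : j ≠ b) (a : Fin n) (x : Fin n → Bool) :
    CNOT a b x j = x j :=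
  if_neg h

theorem circuit_cons (g : Fin n × Fin n) (L : List (Fin n × Fin n)) (x : Fin n → Bool) :
    circuit (g :: L) x = circuit L (CNOT g.1 g.2 x) :=
  rfl

theorem circuit_append (L₁ L₂ : List (Fin n × Fin n)) (x : Fin n → Bool) :
    circuit (L₁ ++ L₂) x = circuit L₂ (circuit L₁ x) :=
  List.foldl_append

/-- The target wires of the gates of a circuit, in order and with multiplicity. -/
abbrev targets (L : List (Fin n × Fin n)) : List (Fin n) :=
  L.map Prod.snd

theorem circuit_apply_of_notMem_targets {L : List (Fin n × Fin n)} {j : Fin n}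
    (hj : j ∉ targets L) (x : Fin n → Bool) : circuit L x j = x j := by
  induction L generalizing x with
  | nil => rfl
  | cons g L ih =>
    obtain ⟨hg, hL⟩ : j ≠ g.2 ∧ j ∉ targets L := List.ne_and_not_mem_of_not_mem_cons hj
    rw [circuit_cons, ih hL, CNOT_apply_of_ne hg]

theorem exists_eq_append_of_count_targets_eq_one {L : List (Fin n × Fin n)} {b : Fin n}
    (hb : (targets L).count b = 1) :
    ∃ L₁ a L₂, L = L₁ ++ (a, b) :: L₂ ∧ b ∉ targets L₁ ∧ b ∉ targets L₂ := by
  obtain ⟨⟨a, _⟩, hmem, rfl⟩ : ∃ g ∈ L, g.2 = b :=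
    List.mem_map.mp (List.count_pos_iff.mp (by lia))
  obtain ⟨L₁, L₂, rfl⟩ := List.append_of_mem hmem
  rw [targets, List.map_append, List.map_cons, List.count_append, List.count_cons_self] at hb
  exact ⟨L₁, a, L₂, rfl, List.count_eq_zero.mp (by lia), List.count_eq_zero.mp (by lia)⟩

theorem circuit_append_cons_apply_target {L₁ L₂ : List (Fin n × Fin n)} {b : Fin n}
    (h₁ : b ∉ targets L₁) (h₂ : b ∉ targets L₂) (a : Fin n) (x : Fin n → Bool) :
    circuit (L₁ ++ (a, b) :: L₂) x b = xor (circuit L₁ x a) (x b) := by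
  rw [circuit_append, circuit_cons, circuit_apply_of_notMem_targets h₂, CNOT_apply_self,
    circuit_apply_of_notMem_targets h₁]

/-- The values replaced by the successive gates of a circuit: for each gate, the value of its target
wire just before the gate fires, as a function of the input of the whole circuit. -/
def overwrittenValues : List (Fin n × Fin n) → List ((Fin n → Bool) → Bool)
  | [] => []
  | g :: L => (fun x => x g.2) :: (overwrittenValues L).map (· ∘ CNOT g.1 g.2)

theorem length_overwrittenValues (L : List (Fin n × Fin n)) :
    (overwrittenValues L).length = L.length := by
  induction L with
  | nil => rfl
  | cons g L ih => simp [overwrittenValues, ih]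

theorem overwrittenValues_append (L₁ L₂ : List (Fin n × Fin n)) :
    overwrittenValues (L₁ ++ L₂) =
      overwrittenValues L₁ ++ (overwrittenValues L₂).map (· ∘ circuit L₁) := by
  induction L₁ with
  | nil => exact (List.map_id _).symm
  | cons g L₁ ih =>
    simp only [List.cons_append, overwrittenValues, ih, List.map_append, List.map_map]
    rfl

theorem eval_mem_overwrittenValues {L : List (Fin n × Fin n)} {j : Fin n}
    (hj : j ∈ targets L) : (fun x => x j) ∈ overwrittenValues L := by
  induction L with
  | nil => cases hj
  | cons g L ih =>
    by_cases hg : j = g.2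
    · subst hg
      exact List.mem_cons_self
    · have hL : j ∈ targets L := List.mem_of_ne_of_mem hg hj
      exact List.mem_cons_of_mem _
        (List.mem_map.mpr ⟨_, ih hL, funext fun x => CNOT_apply_of_ne hg g.1 x⟩)

theorem circuit_apply_mem_overwrittenValues_append {L₁ L₂ : List (Fin n × Fin n)} {j : Fin n}
    (hj : j ∈ targets L₂) :
    (fun x => circuit L₁ x j) ∈ overwrittenValues (L₁ ++ L₂) := by
  rw [overwrittenValues_append]
  exact List.mem_append_right _ (List.mem_map.mpr ⟨_, eval_mem_overwrittenValues hj, rfl⟩)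

section CircuitEqComp

variable {L : List (Fin n × Fin n)} {f : Fin n → Fin n}

theorem mem_targets_of_circuit_eq_comp (h : circuit L = fun x => x ∘ f) {j : Fin n}
    (hj : f j ≠ j) : j ∈ targets L := by
  by_contra hmem
  refine hj (eval_injective (β := Bool) (funext fun x => ?_))
  calc x (f j)
    _ = circuit L x j := (congrFun (congrFun h x) j).symm
    _ = x j := circuit_apply_of_notMem_targets hmem x

theorem pairParity_mem_overwrittenValues (h : circuit L = fun x => x ∘ f) {b : Fin n}
    (hb : (targets L).count b = 1) : pairParity b (f b) ∈ overwrittenValues L := by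
  obtain ⟨L₁, a, L₂, rfl, hb₁, hb₂⟩ := exists_eq_append_of_count_targets_eq_one hb
  have control_eq : (fun x => circuit L₁ x a) = pairParity b (f b) := by
    funext x
    have hx : xor (circuit L₁ x a) (x b) = x (f b) :=
      (circuit_append_cons_apply_target hb₁ hb₂ a x).symm.trans (congrFun (congrFun h x) b)
    rw [pairParity, ← hx, Bool.xor_comm (x b), Bool.xor_assoc, Bool.xor_self, Bool.xor_false]
  have overwritten_later : a ∈ targets ((a, b) :: L₂) := by
    by_contra ha
    refine pairParity_ne_eval b (f b) (f a) (control_eq.symm.trans (funext fun x => ?_))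
    calc circuit L₁ x a
      _ = circuit (L₁ ++ (a, b) :: L₂) x a := by
        rw [circuit_append, circuit_apply_of_notMem_targets ha]
      _ = x (f a) := congrFun (congrFun h x) a
  exact control_eq ▸ circuit_apply_mem_overwrittenValues_append overwritten_later

theorem card_add_card_count_targets_eq_one_le_length (h : circuit L = fun x => x ∘ f)
    {s : Finset (Fin n)} (hs : ∀ j ∈ s, f (f j) ≠ j) :
    #s + #{j ∈ s | (targets L).count j = 1} ≤ L.length := by
  set t := {j ∈ s | (targets L).count j = 1}
  let inputs : Finset ((Fin n → Bool) → Bool) := s.image fun j x => x j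
  let parities : Finset ((Fin n → Bool) → Bool) := t.image fun b => pairParity b (f b)
  have card_inputs : #inputs = #s := card_image_of_injective s eval_injective
  have card_parities : #parities = #t :=
    card_image_of_injOn ((injOn_pairParity_apply f).mono fun j hj => hs j (mem_filter.mp hj).1)
  have disjoint : Disjoint inputs parities := by
    rw [disjoint_left, forall_mem_image]
    simp only [parities, mem_image, not_exists, not_and]
    exact fun j _ b _ => pairParity_ne_eval b (f b) j
  have subset : inputs ∪ parities ⊆ (overwrittenValues L).toFinset := by
    simp only [inputs, parities, union_subset_iff, image_subset_iff, List.mem_toFinset]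
    exact ⟨fun j hj => eval_mem_overwrittenValues
        (mem_targets_of_circuit_eq_comp h (apply_ne_of_apply_apply_ne (hs j hj))),
      fun b hb => pairParity_mem_overwrittenValues h (mem_filter.mp hb).2⟩
  calc #s + #t
    _ = #(inputs ∪ parities) := by rw [card_union_of_disjoint disjoint, card_inputs, card_parities]
    _ ≤ #(overwrittenValues L).toFinset := card_le_card subset
    _ ≤ (overwrittenValues L).length := List.toFinset_card_le _
    _ = L.length := length_overwrittenValues L

end CircuitEqComp

theorem no_four_cnot_cycle3_general (L : List (Fin n × Fin n)) (f : Fin n → Fin n)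
    (h : circuit L = fun x => x ∘ f) :
    3 * #{j | f (f j) ≠ j} ≤ 2 * L.length := by
  set s : Finset (Fin n) := {j | f (f j) ≠ j}
  have hs : ∀ j ∈ s, f (f j) ≠ j := fun j hj => (mem_filter.mp hj).2
  have hmem : ∀ j ∈ s, j ∈ targets L := fun j hj =>
    mem_targets_of_circuit_eq_comp h (apply_ne_of_apply_apply_ne (hs j hj))
  have by_targets : 2 * #s ≤ L.length + #{j ∈ s | (targets L).count j = 1} :=
    L.length_map (f := Prod.snd) ▸ two_mul_card_le_length_add_card_count_eq_one hmem
  have by_overwritten : #s + #{j ∈ s | (targets L).count j = 1} ≤ L.length :=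
    card_add_card_count_targets_eq_one_le_length h hs
  lia

/-- On three qubits, no list of exactly four CNOT gates realizes the cyclic shift
`j ↦ j + 1 (mod 3)`. -/
theorem no_four_cnot_cycle3 (L : List (Fin 3 × Fin 3))
    (hL : ∀ g ∈ L, g.1 ≠ g.2) (hlen : L.length = 4) :
    circuit L ≠ fun x => x ∘ (finRotate 3) := fun h =>
  absurd (hlen ▸ no_four_cnot_cycle3_general L _ h) (by decide)
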